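/- arXiv:1402.4397 — 2 statements merged into one kernel-verified Lean document; each statement's English description precedes it below -/
import Mathlib

section
/- Let D be a commutative atomic domain and n ≥ 1, and let T_n(D)^• be the multiplicative monoid of n×n upper triangular matrices over D with nonzero determinant. Then: (1) a matrix A = [a_{ij}] ∈ T_n(D)^• is an atom of T_n(D)^• if and only if there exists m ∈ {1, …, n} such that a_{ii} ∈ D^× for all i ≠ m and a_{mm} is an atom of D; (2) every atom A of T_n(D)^• whose non-unit diagonal entry sits in position (m,m) and equals (up to associates in D) an atom a of D is associated in T_n(D)^• to the diagonal matrix whose (m,m) entry is a and whose other diagonal entries are 1. -/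
def MAtom {H : Type*} [Monoid H] (u : H) : Prop :=
  ¬ IsUnit u ∧ ∀ a b : H, u = a * b → IsUnit a ∨ IsUnit b

def TAssoc {H : Type*} [Monoid H] (a b : H) : Prop :=
  ∃ ε η : Hˣ, b = (ε : H) * a * (η : H)

def Atomic (H : Type*) [Monoid H] : Prop :=
  ∀ a : H, ¬ IsUnit a → ∃ l : List H, l ≠ [] ∧ (∀ u ∈ l, MAtom u) ∧ a = l.prod

def T1Cond {H T : Type*} [Monoid H] [Monoid T] (φ : H →* T) : Prop :=
  (∀ t : T, ∃ (ε η : Tˣ) (a : H), t = (ε : T) * φ a * (η : T)) ∧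
    ∀ a : H, IsUnit (φ a) ↔ IsUnit a

def IsTransferHom {H T : Type*} [Monoid H] [Monoid T] (φ : H →* T) : Prop :=
  T1Cond φ ∧
    ∀ (a : H) (b₁ b₂ : T), φ a = b₁ * b₂ →
      ∃ (a₁ a₂ : H) (ε : Tˣ), a = a₁ * a₂ ∧ φ a₁ = b₁ * ((ε⁻¹ : Tˣ) : T) ∧ φ a₂ = (ε : T) * b₂

def IsWeakTransferHom {H T : Type*} [Monoid H] [Monoid T] (φ : H →* T) : Prop :=
  T1Cond φ ∧
    ∀ (a : H) (n : ℕ), 0 < n → ∀ v : Fin n → T, (∀ i, MAtom (v i)) →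
      φ a = (List.ofFn v).prod →
      ∃ (u : Fin n → H) (σ : Equiv.Perm (Fin n)),
        (∀ i, MAtom (u i)) ∧ a = (List.ofFn u).prod ∧ ∀ i, TAssoc (φ (u i)) (v (σ i))

def IsIsoatomic {H T : Type*} [Monoid H] [Monoid T] (φ : H →* T) : Prop :=
  ∀ u v : H, MAtom u → MAtom v → TAssoc (φ u) (φ v) → TAssoc u v

def lengthsOf {H : Type*} [Monoid H] (a : H) : Set ℕ :=
  {n | (n = 0 ∧ IsUnit a) ∨
    ∃ l : List H, l ≠ [] ∧ (∀ u ∈ l, MAtom u) ∧ a = l.prod ∧ l.length = n}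
/-- The monoid of upper triangular `n × n` matrices over `D` with nonzero determinant. -/
def TriMon (n : ℕ) (D : Type*) [CommRing D] [IsDomain D] :
    Submonoid (Matrix (Fin n) (Fin n) D) where
  carrier := {A | A.BlockTriangular id ∧ A.det ≠ 0}
  one_mem' := ⟨Matrix.blockTriangular_one, by simp⟩
  mul_mem' := by
    rintro A B ⟨hA, hdA⟩ ⟨hB, hdB⟩
    exact ⟨hA.mul hB, by rw [Matrix.det_mul]; exact mul_ne_zero hdA hdB⟩

/-- The monoid of `n × n` matrices over `D` with nonzero determinant. -/
def GLMon (n : ℕ) (D : Type*) [CommRing D] [IsDomain D] :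
    Submonoid (Matrix (Fin n) (Fin n) D) where
  carrier := {A | A.det ≠ 0}
  one_mem' := by simp
  mul_mem' := by
    intro A B hA hB
    simp only [Set.mem_setOf_eq, Matrix.det_mul] at *
    exact mul_ne_zero hA hB

/-- The monoid of nonzero elements of `D`. -/
def nzMon (D : Type*) [CommRing D] [IsDomain D] : Submonoid D where
  carrier := {a | a ≠ 0}
  one_mem' := one_ne_zero
  mul_mem' := fun ha hb => mul_ne_zero ha hb

/-- The determinant as a monoid homomorphism `M_n(D)^• → D \ {0}`. -/
def detHom (n : ℕ) (D : Type*) [CommRing D] [IsDomain D] :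
    GLMon n D →* nzMon D where
  toFun A := ⟨(A : Matrix (Fin n) (Fin n) D).det, A.2⟩
  map_one' := Subtype.ext (by simp)
  map_mul' := fun A B => Subtype.ext (by simp [Matrix.det_mul])

/-!
If `s` is an upper set of indices, an upper triangular matrix `A` is the product of the matrix
keeping the rows of `A` in `s` and the matrix keeping the remaining rows, all other rows being those
of the identity. Splitting an atom between two non-unit diagonal entries is thus impossible, so it
has a single non-unit diagonal entry, in position `m` say. Cutting at `m` and pulling that entry out
as a diagonal factor shows that the atom is associated to a diagonal matrix, to which multiplicative
questions about the entry transfer. Conversely the determinant reflects units, and it is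
irreducible as soon as one diagonal entry is irreducible and the others are units.
-/

theorem mAtom_iff_irreducible {H : Type*} [Monoid H] {u : H} : MAtom u ↔ Irreducible u :=
  irreducible_iff.symm

theorem TAssoc.irreducible_iff {H : Type*} [Monoid H] {a b : H} (h : TAssoc a b) :
    Irreducible a ↔ Irreducible b := by
  obtain ⟨ε, η, rfl⟩ := h
  rw [irreducible_mul_units, irreducible_units_mul]

section Rows

variable {ι R : Type*}

/-- The matrix whose rows in `s` are those of `A` and whose other rows are those of the identity;
these are the factors into which a triangular matrix is cut. -/
def keepRows [DecidableEq ι] [Zero R] [One R] (s : Set ι) [DecidablePred (· ∈ s)]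
    (A : Matrix ι ι R) : Matrix ι ι R :=
  Matrix.of (s.piecewise A.row (1 : Matrix ι ι R).row)

theorem keepRows_apply [DecidableEq ι] [Zero R] [One R] (s : Set ι) [DecidablePred (· ∈ s)]
    (A : Matrix ι ι R) (i j : ι) :
    keepRows s A i j = if i ∈ s then A i j else (1 : Matrix ι ι R) i j := by
  by_cases hi : i ∈ s <;> simp [keepRows, hi]

theorem keepRows_isUpperTriangular [DecidableEq ι] [Preorder ι] [Zero R] [One R]
    {A : Matrix ι ι R} (hA : A.IsUpperTriangular) (s : Set ι) [DecidablePred (· ∈ s)] :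
    (keepRows s A).IsUpperTriangular := by
  intro i j hij
  rw [keepRows_apply, hA hij, Matrix.blockTriangular_one hij, ite_self]

theorem keepRows_mul_keepRows_compl [LinearOrder ι] [Fintype ι] [NonAssocSemiring R]
    {A : Matrix ι ι R} (hA : A.IsUpperTriangular) {s : Set ι} [DecidablePred (· ∈ s)]
    (hs : IsUpperSet s) : keepRows s A * keepRows sᶜ A = A := by
  ext i j
  by_cases hi : i ∈ s
  · have hterm (k : ι) : A i k * keepRows sᶜ A k j = A i k * (1 : Matrix ι ι R) k j := by
      by_cases hk : k ∈ s
      · simp [keepRows_apply, hk]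
      · have hki : k < i := lt_of_not_ge fun hik => hk (hs hik hi)
        rw [hA hki, zero_mul, zero_mul]
    calc (keepRows s A * keepRows sᶜ A) i j
        = ∑ k, A i k * keepRows sᶜ A k j := by simp [Matrix.mul_apply, keepRows_apply s, hi]
      _ = (A * 1 : Matrix ι ι R) i j := by simp only [hterm, Matrix.mul_apply]
      _ = A i j := by rw [mul_one]
  · calc (keepRows s A * keepRows sᶜ A) i j
        = (1 * keepRows sᶜ A : Matrix ι ι R) i j := by
          simp [Matrix.mul_apply, keepRows_apply s, hi]
      _ = A i j := by simp [keepRows_apply, hi]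

/-- The matrix `A` with its `(m, m)` entry replaced by `b`; used to replace a non-unit diagonal
entry by a unit. -/
def updateDiag [DecidableEq ι] (A : Matrix ι ι R) (m : ι) (b : R) : Matrix ι ι R :=
  A.updateRow m (Function.update (A m) m b)

theorem updateDiag_apply [DecidableEq ι] (A : Matrix ι ι R) (m : ι) (b : R) (i j : ι) :
    updateDiag A m b i j = if i = m ∧ j = m then b else A i j := by
  by_cases hi : i = m <;> by_cases hj : j = m <;> simp [updateDiag, hi, hj]

theorem updateDiag_isUpperTriangular [DecidableEq ι] [Preorder ι] [Zero R] {A : Matrix ι ι R}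
    (hA : A.IsUpperTriangular) (m : ι) (b : R) : (updateDiag A m b).IsUpperTriangular := by
  intro i j hij
  rw [updateDiag_apply, if_neg, hA hij]
  rintro ⟨rfl, rfl⟩
  exact lt_irrefl _ hij

theorem keepRows_Ici_eq_mul_diagonal [LinearOrder ι] [Fintype ι] [NonAssocSemiring R]
    {A : Matrix ι ι R} (hA : A.IsUpperTriangular) {m : ι} {b c : R} (h : A m m = b * c) :
    keepRows (Set.Ici m) A =
      keepRows (Set.Ici m) (updateDiag A m b) *
        Matrix.diagonal fun i => if i = m then c else 1 := by
  ext i j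
  rw [Matrix.mul_diagonal, keepRows_apply, keepRows_apply, updateDiag_apply]
  rcases eq_or_ne j m with rfl | hj
  · rcases lt_trichotomy i j with hi | rfl | hi
    · simp [hi.not_ge, hi.ne]
    · simp [h]
    · simp [hi.le, hi.ne', hA hi]
  · simp [hj]

end Rows

theorem irreducible_prod_of_isUnit {ι M : Type*} [CommMonoid M] {s : Finset ι} {f : ι → M} {m : ι}
    (hm : m ∈ s) (hf : Irreducible (f m)) (hunit : ∀ i ∈ s, i ≠ m → IsUnit (f i)) :
    Irreducible (∏ i ∈ s, f i) := by
  classical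
  have hrest : IsUnit (∏ i ∈ s.erase m, f i) :=
    IsUnit.prod_iff.2 fun i hi => hunit i (Finset.mem_of_mem_erase hi) (Finset.ne_of_mem_erase hi)
  rwa [← Finset.mul_prod_erase s f hm, irreducible_mul_isUnit hrest]

namespace TriMon

variable {D : Type*} [CommRing D] [IsDomain D] {n : ℕ}

theorem mem_iff {A : Matrix (Fin n) (Fin n) D} :
    A ∈ TriMon n D ↔ A.IsUpperTriangular ∧ ∀ i, A i i ≠ 0 := by
  refine and_congr_right fun hA => ?_
  simp [Matrix.det_of_isUpperTriangular hA, Finset.prod_ne_zero_iff]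

theorem diag_ne_zero (A : TriMon n D) (i : Fin n) : A.1 i i ≠ 0 :=
  (mem_iff.1 A.2).2 i

theorem det_eq_prod (A : TriMon n D) : A.1.det = ∏ i, A.1 i i :=
  Matrix.det_of_isUpperTriangular A.2.1

/-- The determinant as a monoid homomorphism `T_n(D)^• → D`; it reflects units, hence
irreducibility. -/
def detMonoidHom (n : ℕ) (D : Type*) [CommRing D] [IsDomain D] : TriMon n D →* D :=
  Matrix.detMonoidHom.comp (TriMon n D).subtype

instance : IsLocalHom (detMonoidHom n D) where
  map_nonunit A hA := by
    have hdet : IsUnit A.1.det := hA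
    have := A.1.invertibleOfIsUnitDet hdet
    have hinv : A.1⁻¹ ∈ TriMon n D :=
      ⟨Matrix.blockTriangular_inv_of_blockTriangular A.2.1,
        (Matrix.isUnit_nonsing_inv_det_iff.2 hdet).ne_zero⟩
    exact ⟨⟨A, ⟨A.1⁻¹, hinv⟩, Subtype.ext (A.1.mul_nonsing_inv hdet),
      Subtype.ext (A.1.nonsing_inv_mul hdet)⟩, rfl⟩

theorem isUnit_iff {A : TriMon n D} : IsUnit A ↔ ∀ i, IsUnit (A.1 i i) := by
  rw [← isUnit_map_iff (detMonoidHom n D), ← IsUnit.prod_univ_iff, ← det_eq_prod]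
  rfl

theorem irreducible_of_diag {A : TriMon n D} {m : Fin n} (hm : Irreducible (A.1 m m))
    (hunit : ∀ i ≠ m, IsUnit (A.1 i i)) : Irreducible A := by
  refine Irreducible.of_map (f := detMonoidHom n D) ?_
  change Irreducible A.1.det
  rw [det_eq_prod]
  exact irreducible_prod_of_isUnit (Finset.mem_univ m) hm fun i _ => hunit i

/-- `keepRows` as an operation on `T_n(D)^•`. -/
def keepRows (s : Set (Fin n)) [DecidablePred (· ∈ s)] (A : TriMon n D) : TriMon n D :=
  ⟨_root_.keepRows s A.1, mem_iff.2 ⟨keepRows_isUpperTriangular A.2.1 s, fun i => by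
    rw [keepRows_apply]
    split_ifs
    · exact diag_ne_zero A i
    · simp⟩⟩

theorem isUnit_keepRows_iff {s : Set (Fin n)} [DecidablePred (· ∈ s)] {A : TriMon n D} :
    IsUnit (keepRows s A) ↔ ∀ i ∈ s, IsUnit (A.1 i i) := by
  refine isUnit_iff.trans (forall_congr' fun i => ?_)
  by_cases hi : i ∈ s <;> simp [keepRows, keepRows_apply, hi]

theorem keepRows_mul_keepRows_compl (A : TriMon n D) {s : Set (Fin n)} [DecidablePred (· ∈ s)]
    (hs : IsUpperSet s) : keepRows s A * keepRows sᶜ A = A :=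
  Subtype.ext (_root_.keepRows_mul_keepRows_compl A.2.1 hs)

theorem eq_of_irreducible_of_not_isUnit {A : TriMon n D} (hA : Irreducible A) {k m : Fin n}
    (hk : ¬ IsUnit (A.1 k k)) (hm : ¬ IsUnit (A.1 m m)) : k = m := by
  wlog hkm : k ≤ m generalizing k m
  · exact (this hm hk (le_of_not_ge hkm)).symm
  rcases hA.isUnit_or_isUnit (keepRows_mul_keepRows_compl A (isUpperSet_Ici m)).symm with h | h
  · exact absurd (isUnit_keepRows_iff.1 h m Set.self_mem_Ici) hm
  · by_contra hne
    exact hk (isUnit_keepRows_iff.1 h k fun hmk : m ≤ k => hne (le_antisymm hkm hmk))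

/-- The diagonal matrix in `T_n(D)^•` with `a` in position `(m, m)` and `1` elsewhere. -/
def diagonalAt (m : Fin n) (a : D) (ha : a ≠ 0) : TriMon n D :=
  ⟨Matrix.diagonal fun i => if i = m then a else 1,
    mem_iff.2 ⟨Matrix.blockTriangular_diagonal _, fun i => by
      rw [Matrix.diagonal_apply_eq]
      split_ifs
      · exact ha
      · exact one_ne_zero⟩⟩

theorem isUnit_diagonalAt_iff {m : Fin n} {a : D} (ha : a ≠ 0) :
    IsUnit (diagonalAt m a ha) ↔ IsUnit a := by
  rw [isUnit_iff]
  refine ⟨fun h => by simpa [diagonalAt] using h m, fun h i => ?_⟩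
  by_cases hi : i = m <;> simp [diagonalAt, hi, h]

theorem diagonalAt_mul (m : Fin n) {a b : D} (ha : a ≠ 0) (hb : b ≠ 0) :
    diagonalAt m (a * b) (mul_ne_zero ha hb) = diagonalAt m a ha * diagonalAt m b hb := by
  refine Subtype.ext ((Matrix.diagonal_mul_diagonal _ _).trans ?_).symm
  refine congrArg Matrix.diagonal (funext fun i => ?_)
  rw [ite_mul_ite, one_mul]

theorem irreducible_of_irreducible_diagonalAt {m : Fin n} {a : D} (ha : a ≠ 0)
    (h : Irreducible (diagonalAt m a ha)) : Irreducible a where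
  not_isUnit hu := h.not_isUnit ((isUnit_diagonalAt_iff ha).2 hu)
  isUnit_or_isUnit := by
    rintro b c rfl
    have hb := left_ne_zero_of_mul ha
    have hc := right_ne_zero_of_mul ha
    exact (h.isUnit_or_isUnit (diagonalAt_mul m hb hc)).imp
      (isUnit_diagonalAt_iff hb).1 (isUnit_diagonalAt_iff hc).1

/-- `updateDiag` as an operation on `T_n(D)^•`. -/
def updateDiag (A : TriMon n D) (m : Fin n) (b : D) (hb : b ≠ 0) : TriMon n D :=
  ⟨_root_.updateDiag A.1 m b, mem_iff.2 ⟨updateDiag_isUpperTriangular A.2.1 m b, fun i => by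
    rw [updateDiag_apply]
    split_ifs
    · exact hb
    · exact diag_ne_zero A i⟩⟩

theorem eq_keepRows_mul_diagonalAt_mul_keepRows (A : TriMon n D) {m : Fin n} {b c : D}
    (hb : b ≠ 0) (hc : c ≠ 0) (h : A.1 m m = b * c) :
    A = keepRows (Set.Ici m) (updateDiag A m b hb) * diagonalAt m c hc *
      keepRows (Set.Ici m)ᶜ A := by
  have hcut : keepRows (Set.Ici m) A =
      keepRows (Set.Ici m) (updateDiag A m b hb) * diagonalAt m c hc :=
    Subtype.ext (keepRows_Ici_eq_mul_diagonal A.2.1 h)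
  rw [← hcut, keepRows_mul_keepRows_compl A (isUpperSet_Ici m)]

theorem tAssoc_diagonalAt {A : TriMon n D} {m : Fin n} {a : D} (ha : a ≠ 0)
    (hunit : ∀ i ≠ m, IsUnit (A.1 i i)) (hm : Associated (A.1 m m) a) :
    TAssoc A (diagonalAt m a ha) := by
  obtain ⟨u, hu⟩ := hm.symm
  have hfactor := eq_keepRows_mul_diagonalAt_mul_keepRows A u.ne_zero ha
    (hu.symm.trans (mul_comm a u))
  have hleft : IsUnit (keepRows (Set.Ici m) (updateDiag A m u u.ne_zero)) := by
    refine isUnit_keepRows_iff.2 fun i _ => ?_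
    by_cases hi : i = m <;> simp [updateDiag, updateDiag_apply, hi, hunit]
  have hright : IsUnit (keepRows (Set.Ici m)ᶜ A) :=
    isUnit_keepRows_iff.2 fun i hi => hunit i fun him => hi him.ge
  obtain ⟨P, hP⟩ := hleft
  obtain ⟨Q, hQ⟩ := hright
  rw [← hP, ← hQ] at hfactor
  refine ⟨P⁻¹, Q⁻¹, ?_⟩
  rw [hfactor, mul_assoc, mul_assoc, Units.mul_inv, mul_one, Units.inv_mul_cancel_left]

theorem exists_irreducible_diag {A : TriMon n D} (hA : Irreducible A) :
    ∃ m, (∀ i ≠ m, IsUnit (A.1 i i)) ∧ Irreducible (A.1 m m) := by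
  obtain ⟨m, hm⟩ : ∃ m, ¬ IsUnit (A.1 m m) := by
    simpa [isUnit_iff] using hA.not_isUnit
  have hunit (i : Fin n) (hi : i ≠ m) : IsUnit (A.1 i i) :=
    by_contra fun hiu => hi (eq_of_irreducible_of_not_isUnit hA hiu hm)
  have hassoc := tAssoc_diagonalAt (diag_ne_zero A m) hunit (Associated.refl _)
  exact ⟨m, hunit, irreducible_of_irreducible_diagonalAt _ (hassoc.irreducible_iff.1 hA)⟩

end TriMon

theorem triangular_atoms_general {D : Type*} [CommRing D] [IsDomain D] (n : ℕ) :
    (∀ A : TriMon n D, MAtom A ↔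
      ∃ m : Fin n, (∀ i : Fin n, i ≠ m → IsUnit ((A : Matrix (Fin n) (Fin n) D) i i)) ∧
        Irreducible ((A : Matrix (Fin n) (Fin n) D) m m)) ∧
    (∀ (A : TriMon n D) (m : Fin n) (a : D), MAtom A →
      ¬ IsUnit ((A : Matrix (Fin n) (Fin n) D) m m) →
      Associated ((A : Matrix (Fin n) (Fin n) D) m m) a →
      ∃ hmem : (Matrix.diagonal fun i => if i = m then a else 1) ∈ TriMon n D,
        TAssoc A ⟨Matrix.diagonal fun i => if i = m then a else 1, hmem⟩) := by
  simp only [mAtom_iff_irreducible]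
  refine ⟨fun A => ⟨TriMon.exists_irreducible_diag, fun ⟨m, hunit, hm⟩ =>
    TriMon.irreducible_of_diag hm hunit⟩, fun A m a hA hm ha => ?_⟩
  have hunit (i : Fin n) (hi : i ≠ m) : IsUnit (A.1 i i) :=
    by_contra fun hiu => hi (TriMon.eq_of_irreducible_of_not_isUnit hA hiu hm)
  exact ⟨_, TriMon.tAssoc_diagonalAt (ha.ne_zero_iff.1 (TriMon.diag_ne_zero A m)) hunit ha⟩

/-- For a commutative atomic domain `D`: a matrix in `T_n(D)^•` is an
atom iff exactly one diagonal entry is a non-unit and that entry is an atom of `D`; and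
every atom whose non-unit diagonal entry sits at `(m, m)` and is associated to an atom
`a` of `D` is associated to the corresponding diagonal matrix. -/
theorem triangular_atoms {D : Type*} [CommRing D] [IsDomain D]
    (hD : ∀ a : D, a ≠ 0 → ¬ IsUnit a →
      ∃ l : List D, (∀ p ∈ l, Irreducible p) ∧ a = l.prod)
    (n : ℕ) (hn : 1 ≤ n) :
    (∀ A : TriMon n D, MAtom A ↔
      ∃ m : Fin n, (∀ i : Fin n, i ≠ m → IsUnit ((A : Matrix (Fin n) (Fin n) D) i i)) ∧
        Irreducible ((A : Matrix (Fin n) (Fin n) D) m m)) ∧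
    (∀ (A : TriMon n D) (m : Fin n) (a : D), MAtom A →
      ¬ IsUnit ((A : Matrix (Fin n) (Fin n) D) m m) → Irreducible a →
      Associated ((A : Matrix (Fin n) (Fin n) D) m m) a →
      ∃ hmem : (Matrix.diagonal fun i => if i = m then a else 1) ∈ TriMon n D,
        TAssoc A ⟨Matrix.diagonal fun i => if i = m then a else 1, hmem⟩) := by
  obtain ⟨hatom, hassoc⟩ := triangular_atoms_general (D := D) n
  exact ⟨hatom, fun A m a hA hm _ => hassoc A m a hA hm⟩
end

section
/- Let D be a commutative principal ideal domain and n ≥ 1, and let M_n(D)^• denote the multiplicative monoid of n×n matrices over D with nonzero determinant (equivalently, the non zero-divisors of the matrix ring M_n(D)). Then the determinant map det: M_n(D)^• → D \ {0} is an isoatomic transfer homomorphism. In particular, a matrix A ∈ M_n(D)^• is an atom of M_n(D)^• if and only if det(A) is a prime element of D. -/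
/-!
By the Smith normal form, a matrix `A` with nonzero determinant is `ε * diagonal d * η` with `ε` and
`η` invertible, so that `det A` is associated to `∏ i, d i`. A divisor `b` of `det A` splits along
this product into divisors of the entries `d i`, and this splitting factors the diagonal matrix,
hence `A`, with left factor of determinant `b` up to a unit. If `det A` is irreducible, then all the
`d i` but one are units, so `A` is associated to a diagonal matrix with entries `1, …, 1, det A`;
the position of `det A` does not matter, as permutation matrices are invertible.
-/

open Matrix Module

section AssociatedElements

variable {M N : Type*} [Monoid M] [Monoid N] {a b c : M}

namespace TAssoc

theorem symm (h : TAssoc a b) : TAssoc b a := by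
  obtain ⟨ε, η, rfl⟩ := h
  exact ⟨ε⁻¹, η⁻¹, by simp [mul_assoc]⟩

theorem trans (hab : TAssoc a b) (hbc : TAssoc b c) : TAssoc a c := by
  obtain ⟨ε, η, rfl⟩ := hab
  obtain ⟨ε', η', rfl⟩ := hbc
  exact ⟨ε' * ε, η * η', by simp only [Units.val_mul, mul_assoc]⟩

theorem map (h : TAssoc a b) (φ : M →* N) : TAssoc (φ a) (φ b) := by
  obtain ⟨ε, η, rfl⟩ := h
  exact ⟨Units.map φ ε, Units.map φ η, by simp⟩

end TAssoc

theorem tAssoc_iff_associated {M : Type*} [CommMonoid M] {a b : M} :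
    TAssoc a b ↔ Associated a b := by
  constructor
  · rintro ⟨ε, η, rfl⟩
    exact ⟨ε * η, by rw [Units.val_mul, mul_left_comm, mul_assoc]⟩
  · rintro ⟨η, rfl⟩
    exact ⟨1, η, by simp⟩

end AssociatedElements

section SaturatedSubmonoids

variable {M : Type*} [Monoid M] {s : Submonoid M}

theorem exists_units_coe_eq (hs : s.MulSaturated) (u : Mˣ) :
    ∃ v : sˣ, ((v : s) : M) = u :=
  have hu : (u : M) ∈ s ∧ (↑u⁻¹ : M) ∈ s := hs (u.mul_inv.symm ▸ s.one_mem)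
  ⟨⟨⟨u, hu.1⟩, ⟨↑u⁻¹, hu.2⟩, Subtype.ext u.mul_inv, Subtype.ext u.inv_mul⟩, rfl⟩

theorem isUnit_coe_iff (hs : s.MulSaturated) {a : s} : IsUnit (a : M) ↔ IsUnit a := by
  refine ⟨?_, fun h ↦ h.map s.subtype⟩
  rintro ⟨u, hu⟩
  obtain ⟨v, hv⟩ := exists_units_coe_eq hs u
  exact ⟨v, Subtype.ext (hv.trans hu)⟩

theorem TAssoc.of_coe (hs : s.MulSaturated) {a b : s} (h : TAssoc (a : M) (b : M)) :
    TAssoc a b := by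
  obtain ⟨ε, η, h⟩ := h
  obtain ⟨ε', hε⟩ := exists_units_coe_eq hs ε
  obtain ⟨η', hη⟩ := exists_units_coe_eq hs η
  exact ⟨ε', η', Subtype.ext (by simp only [Submonoid.coe_mul, hε, hη, h])⟩

theorem mAtom_iff_irreducible_coe (hs : s.MulSaturated) {a : s} :
    MAtom a ↔ Irreducible (a : M) := by
  rw [irreducible_iff, isUnit_coe_iff hs]
  refine and_congr_right fun _ ↦ ⟨fun h x y hxy ↦ ?_, fun h x y hxy ↦ ?_⟩
  · obtain ⟨hx, hy⟩ := hs (hxy ▸ a.2)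
    exact (h ⟨x, hx⟩ ⟨y, hy⟩ (Subtype.ext hxy)).imp
      (isUnit_coe_iff hs).2 (isUnit_coe_iff hs).2
  · exact (h (congrArg Subtype.val hxy)).imp (isUnit_coe_iff hs).1 (isUnit_coe_iff hs).1

end SaturatedSubmonoids

section TransferHomomorphisms

variable {H T : Type*} [Monoid H]

theorem IsTransferHom.mAtom_map_iff [Monoid T] {φ : H →* T} (hφ : IsTransferHom φ) {a : H} :
    MAtom (φ a) ↔ MAtom a := by
  obtain ⟨⟨-, hunit⟩, hlift⟩ := hφ
  refine and_congr (not_congr (hunit a)) ⟨?_, fun h b₁ b₂ hb ↦ ?_⟩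
  · rintro h a₁ a₂ rfl
    rw [← hunit a₁, ← hunit a₂]
    exact h _ _ (map_mul φ a₁ a₂)
  · obtain ⟨a₁, a₂, ε, rfl, h₁, h₂⟩ := hlift a b₁ b₂ hb
    have := h a₁ a₂ rfl
    rwa [← hunit a₁, ← hunit a₂, h₁, h₂, Units.isUnit_mul_units, Units.isUnit_units_mul] at this

theorem T1Cond.isTransferHom_of_dvd [CommMonoid T] [IsLeftCancelMul T] {φ : H →* T}
    (hφ : T1Cond φ)
    (hdvd : ∀ a b, b ∣ φ a → ∃ a₁ a₂, a = a₁ * a₂ ∧ Associated b (φ a₁)) :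
    IsTransferHom φ := by
  refine ⟨hφ, fun a b₁ b₂ hb ↦ ?_⟩
  obtain ⟨a₁, a₂, rfl, δ, hδ⟩ := hdvd a b₁ (hb ▸ dvd_mul_right b₁ b₂)
  refine ⟨a₁, a₂, δ⁻¹, rfl, by rw [inv_inv, hδ], ?_⟩
  rw [Units.eq_inv_mul_iff_mul_eq]
  apply mul_left_cancel (a := b₁)
  rw [← mul_assoc, hδ, ← map_mul, hb]

end TransferHomomorphisms

section Products

variable {ι M : Type*} [CommMonoid M]

theorem exists_dvd_associated_prod_of_dvd_prod [DecompositionMonoid M] {s : Finset ι}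
    {d : ι → M} {b : M} (hb : b ∣ ∏ i ∈ s, d i) :
    ∃ e : ι → M, (∀ i ∈ s, e i ∣ d i) ∧ Associated b (∏ i ∈ s, e i) := by
  classical
  induction s using Finset.induction_on generalizing b with
  | empty => exact ⟨1, by simp, by simpa [associated_one_iff_isUnit, isUnit_iff_dvd_one] using hb⟩
  | insert j s hj ih =>
    rw [Finset.prod_insert hj] at hb
    obtain ⟨b₁, b₂, hb₁, hb₂, rfl⟩ := exists_dvd_and_dvd_of_dvd_mul hb
    obtain ⟨e, he, hbe⟩ := ih hb₂
    refine ⟨Function.update e j b₁, fun i hi ↦ ?_, ?_⟩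
    · obtain rfl | hij := eq_or_ne i j
      · rwa [Function.update_self]
      · rw [Function.update_of_ne hij]
        exact he i (Finset.mem_of_mem_insert_of_ne hi hij)
    · rw [Finset.prod_insert hj, Function.update_self, Finset.prod_update_of_notMem hj]
      exact hbe.mul_left b₁

theorem exists_associated_mulSingle_of_irreducible_prod [Fintype ι] [DecidableEq ι] {d : ι → M}
    (hd : Irreducible (∏ i, d i)) :
    ∃ i, ∀ j, Associated (d j) (Pi.mulSingle (M := fun _ ↦ M) i (∏ k, d k) j) := by
  obtain ⟨i, hi⟩ : ∃ i, ¬ IsUnit (d i) := by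
    simpa [IsUnit.prod_univ_iff] using hd.not_isUnit
  have hprod := (Finset.mul_prod_erase Finset.univ d (Finset.mem_univ i)).symm
  have hrest : IsUnit (∏ j ∈ Finset.univ.erase i, d j) :=
    (hd.isUnit_or_isUnit hprod).resolve_left hi
  refine ⟨i, fun j ↦ ?_⟩
  obtain rfl | hji := eq_or_ne j i
  · rw [Pi.mulSingle_eq_same, hprod]
    exact (associated_mul_unit_left _ _ hrest).symm
  · rw [Pi.mulSingle_eq_of_ne hji, associated_one_iff_isUnit]
    exact IsUnit.prod_iff.1 hrest j (Finset.mem_erase.2 ⟨hji, Finset.mem_univ j⟩)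

end Products

section EquivalentMatrices

variable {ι R : Type*} [Fintype ι] [DecidableEq ι] [CommRing R]

theorem TAssoc.associated_det {A B : Matrix ι ι R} (h : TAssoc A B) : Associated A.det B.det :=
  tAssoc_iff_associated.1 (h.map detMonoidHom)

theorem tAssoc_diagonal_of_associated {d e : ι → R} (h : ∀ i, Associated (d i) (e i)) :
    TAssoc (diagonal d) (diagonal e) := by
  choose u hu using h
  let U : (Matrix ι ι R)ˣ := Units.map (diagonalRingHom ι R) (MulEquiv.piUnits.symm u)
  have hU : (U : Matrix ι ι R) = diagonal fun i ↦ (u i : R) := rfl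
  exact ⟨1, U, by simp [hU, hu]⟩

theorem tAssoc_diagonal_comp_perm (d : ι → R) (σ : Equiv.Perm ι) :
    TAssoc (diagonal d) (diagonal (d ∘ σ)) := by
  refine ⟨Units.map permMatrixHom (toUnits σ⁻¹), Units.map permMatrixHom (toUnits σ), ?_⟩
  simp [PEquiv.toMatrix_toPEquiv_mul, PEquiv.mul_toMatrix_toPEquiv, Equiv.Perm.inv_def,
    submatrix_diagonal_equiv]

theorem tAssoc_diagonal_mulSingle {a b : R} (hab : Associated a b) (i j : ι) :
    TAssoc (diagonal (Pi.mulSingle i a)) (diagonal (Pi.mulSingle j b)) := by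
  have hperm := tAssoc_diagonal_comp_perm (Pi.mulSingle i a) (Equiv.swap i j)
  rw [Pi.mulSingle_comp_equiv, Equiv.symm_swap, Equiv.swap_apply_left] at hperm
  refine hperm.trans (tAssoc_diagonal_of_associated fun k ↦ ?_)
  obtain rfl | hkj := eq_or_ne k j
  · simpa using hab
  · simp [hkj]

theorem tAssoc_toMatrix {M N : Type*} [AddCommGroup M] [Module R M] [AddCommGroup N] [Module R N]
    (b c : Basis ι R M) (b' c' : Basis ι R N) (f : M →ₗ[R] N) :
    TAssoc (LinearMap.toMatrix b b' f) (LinearMap.toMatrix c c' f) :=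
  ⟨⟨c'.toMatrix b', b'.toMatrix c', c'.toMatrix_mul_toMatrix_flip b',
      b'.toMatrix_mul_toMatrix_flip c'⟩,
    ⟨b.toMatrix c, c.toMatrix b, b.toMatrix_mul_toMatrix_flip c, c.toMatrix_mul_toMatrix_flip b⟩,
    (basis_toMatrix_mul_linearMap_toMatrix_mul_basis_toMatrix c b c' b' f).symm⟩

end EquivalentMatrices

section SmithNormalForm

variable {ι D : Type*} [Fintype ι] [DecidableEq ι] [CommRing D] [IsDomain D]
  [IsPrincipalIdealRing D]

theorem exists_toMatrix_eq_diagonal_of_injective {M N : Type*} [AddCommGroup M] [Module D M]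
    [AddCommGroup N] [Module D N] (b : Basis ι D M) (b' : Basis ι D N) {f : M →ₗ[D] N}
    (hf : Function.Injective f) :
    ∃ (c : Basis ι D M) (c' : Basis ι D N) (d : ι → D),
      LinearMap.toMatrix c c' f = diagonal d := by
  let e : M ≃ₗ[D] LinearMap.range f := LinearEquiv.ofInjective f hf
  have hrank : finrank D (LinearMap.range f) = finrank D N := by
    rw [← e.finrank_eq, finrank_eq_card_basis b, finrank_eq_card_basis b']
  obtain ⟨c', d, c, hc⟩ := Submodule.exists_smith_normal_form_of_rank_eq b' hrank
  have hfc (j : ι) : f (c.map e.symm j) = d j • c' j := by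
    rw [← hc, Basis.map_apply, ← LinearEquiv.ofInjective_apply (h := hf), e.apply_symm_apply]
  refine ⟨c.map e.symm, c', d, ?_⟩
  ext i j
  rw [LinearMap.toMatrix_apply, hfc, map_smul, Basis.repr_self, Finsupp.smul_single_one,
    Finsupp.single_apply, diagonal_apply]
  grind

theorem exists_tAssoc_diagonal_of_det_ne_zero {A : Matrix ι ι D} (hA : A.det ≠ 0) :
    ∃ d : ι → D, TAssoc (diagonal d) A := by
  have hinj : Function.Injective (toLin' A) :=
    (injective_iff_map_eq_zero _).2 fun v hv ↦ eq_zero_of_mulVec_eq_zero hA hv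
  let b := Pi.basisFun D ι
  obtain ⟨c, c', d, hd⟩ := exists_toMatrix_eq_diagonal_of_injective b b hinj
  refine ⟨d, ?_⟩
  have h := tAssoc_toMatrix c b c' b (toLin' A)
  rwa [hd, LinearMap.toMatrix_eq_toMatrix', LinearMap.toMatrix'_toLin'] at h

theorem exists_mul_eq_of_dvd_det {A : Matrix ι ι D} (hA : A.det ≠ 0) {b : D} (hb : b ∣ A.det) :
    ∃ B C : Matrix ι ι D, A = B * C ∧ Associated b B.det := by
  obtain ⟨d, hdA⟩ := exists_tAssoc_diagonal_of_det_ne_zero hA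
  have hbd : b ∣ ∏ i, d i := by
    rwa [← det_diagonal, hdA.associated_det.dvd_iff_dvd_right]
  obtain ⟨e, hed, hbe⟩ := exists_dvd_associated_prod_of_dvd_prod hbd
  choose f hf using fun i ↦ hed i (Finset.mem_univ i)
  obtain ⟨ε, η, rfl⟩ := hdA
  refine ⟨ε * diagonal e, diagonal f * η, ?_, ?_⟩
  · rw [mul_assoc, mul_assoc, ← mul_assoc (diagonal e), diagonal_mul_diagonal, funext hf]
  · have hεe : TAssoc (diagonal e) (ε * diagonal e) := ⟨ε, 1, by simp⟩
    rw [← det_diagonal] at hbe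
    exact hbe.trans hεe.associated_det

theorem exists_tAssoc_diagonal_mulSingle_det {A : Matrix ι ι D} (hA : Irreducible A.det) :
    ∃ i, TAssoc A (diagonal (Pi.mulSingle i A.det)) := by
  obtain ⟨d, hdA⟩ := exists_tAssoc_diagonal_of_det_ne_zero hA.ne_zero
  have hdet : Associated (∏ i, d i) A.det := det_diagonal (d := d) ▸ hdA.associated_det
  obtain ⟨i, hi⟩ := exists_associated_mulSingle_of_irreducible_prod (hdet.symm.irreducible hA)
  exact ⟨i, (hdA.symm.trans (tAssoc_diagonal_of_associated hi)).trans
    (tAssoc_diagonal_mulSingle hdet i i)⟩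

theorem tAssoc_of_associated_det {A B : Matrix ι ι D} (hA : Irreducible A.det)
    (hAB : Associated A.det B.det) : TAssoc A B := by
  obtain ⟨i, hi⟩ := exists_tAssoc_diagonal_mulSingle_det hA
  obtain ⟨j, hj⟩ := exists_tAssoc_diagonal_mulSingle_det (hAB.irreducible hA)
  exact (hi.trans (tAssoc_diagonal_mulSingle hAB i j)).trans hj.symm

end SmithNormalForm

section DetHom

variable {n : ℕ} {D : Type*} [CommRing D] [IsDomain D]

instance : IsLeftCancelMul (nzMon D) where
  mul_left_cancel a _ _ h := Subtype.ext (mul_left_cancel₀ a.2 (congrArg Subtype.val h))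

theorem mulSaturated_nzMon : (nzMon D).MulSaturated :=
  fun _ _ hab ↦ ⟨left_ne_zero_of_mul hab, right_ne_zero_of_mul hab⟩

theorem mulSaturated_GLMon : (GLMon n D).MulSaturated := by
  intro A B (hAB : (A * B).det ≠ 0)
  rw [det_mul] at hAB
  exact ⟨left_ne_zero_of_mul hAB, right_ne_zero_of_mul hAB⟩

theorem t1Cond_detHom (hn : 1 ≤ n) : T1Cond (detHom n D) := by
  refine ⟨fun t ↦ ?_, fun A ↦ ?_⟩
  · have ht : (diagonal (Pi.mulSingle (⟨0, hn⟩ : Fin n) (t : D))).det = t := by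
      rw [det_diagonal, Fintype.prod_pi_mulSingle']
    exact ⟨1, 1, ⟨_, ht.symm ▸ t.2⟩, by simpa using Subtype.ext ht.symm⟩
  · rw [← isUnit_coe_iff mulSaturated_nzMon, ← isUnit_coe_iff mulSaturated_GLMon,
      isUnit_iff_isUnit_det]
    rfl

variable [IsPrincipalIdealRing D]

theorem isTransferHom_detHom (hn : 1 ≤ n) : IsTransferHom (detHom n D) := by
  refine (t1Cond_detHom hn).isTransferHom_of_dvd fun A b hb ↦ ?_
  obtain ⟨B, C, hBC, hdet⟩ := exists_mul_eq_of_dvd_det A.2 (map_dvd (nzMon D).subtype hb)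
  obtain ⟨hB, hC⟩ := mulSaturated_GLMon (hBC ▸ A.2)
  exact ⟨⟨B, hB⟩, ⟨C, hC⟩, Subtype.ext hBC, tAssoc_iff_associated.1
    (.of_coe mulSaturated_nzMon (tAssoc_iff_associated.2 hdet))⟩

theorem isIsoatomic_detHom (hn : 1 ≤ n) : IsIsoatomic (detHom n D) := by
  intro A B hA _ hAB
  rw [← (isTransferHom_detHom hn).mAtom_map_iff, mAtom_iff_irreducible_coe mulSaturated_nzMon] at hA
  have hdet := tAssoc_iff_associated.1 (hAB.map (nzMon D).subtype)
  exact .of_coe mulSaturated_GLMon (tAssoc_of_associated_det hA hdet)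

end DetHom

/-- For a commutative PID `D` and `n ≥ 1`, the determinant
`det : M_n(D)^• → D \ {0}` is an isoatomic transfer homomorphism; in particular a matrix
with nonzero determinant is an atom iff its determinant is a prime element of `D`. -/
theorem det_isTransferHom {D : Type*} [CommRing D] [IsDomain D]
    [IsPrincipalIdealRing D] (n : ℕ) (hn : 1 ≤ n) :
    IsTransferHom (detHom n D) ∧ IsIsoatomic (detHom n D) ∧
      ∀ A : GLMon n D, MAtom A ↔ Prime ((A : Matrix (Fin n) (Fin n) D).det) := by
  have hdet := isTransferHom_detHom (D := D) hn
  refine ⟨hdet, isIsoatomic_detHom hn, fun A ↦ ?_⟩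
  rw [← hdet.mAtom_map_iff, mAtom_iff_irreducible_coe mulSaturated_nzMon, irreducible_iff_prime]
  rfl
end
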